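/- Let f ∈ ℂ[x₁,…,xₙ] be nonconstant with f(0) = 0, written f = ∑_{i≥1} f_i with f_i zero or homogeneous of degree i. For a positive integer e, let d_e = lcm(1,2,…,e) and let I_e(f) be the ideal generated by f_i^{d_e/(e−i+1)} for 1 ≤ i ≤ e. Then (e+1)·c_0(f) ≤ n + d_e · c(I_e(f)). -/

import Mathlib

/-!
The proof translates the substitution `x = t γ` in the arc space into a scaling argument for volumes.

Let `|f| ^ (-2 s)` be integrable near the origin. By Chebyshev, the part of a neighbourhood of `0`
where `|f| ≤ τ` has volume `O(τ ^ (2 s))`. Fix a ball `B`. If `u ∈ B` satisfies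
`|fᵢ(u)| ≤ r ^ (e + 1 - i)` for `1 ≤ i ≤ e`, then
`|f(r u)| ≤ ∑ rⁱ |fᵢ(u)| = O(r ^ (e + 1))`. Since `u ↦ r u` multiplies volumes by `r ^ (2 n)`, the set
of these `u` has volume `O(r ^ (2 q))` with `q = (e + 1) s - n` (`exists_volume_sublevel_le`).

The condition on `u` says that each generator `gᵢ = fᵢ ^ (d / (e - i + 1))` of the ideal is at most
`r ^ d` in absolute value. With `τ = r ^ (2 d)` the set `∑ |gᵢ|² ≤ τ` in `B` thus has volume
`O(τ ^ (q / d))`, and by the layer cake formula (`integrableOn_rpow_neg_of_volume_le`)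
`(∑ |gᵢ|²) ^ (-σ)` is integrable on `B` for all `0 < σ < q / d`. As `B` is arbitrary, the threshold of
the ideal at every one of its zeros is at least `q / d`, which is the claim.

If the ideal is zero, the volume estimate applies to all of `B`, so `q > 0` is impossible and
`(e + 1) s ≤ n`. Suprema of unbounded sets of reals are `0` in Lean, so the set of exponents of
a nonzero ideal also has to be bounded (`lctIdealAt_set_bddAbove`), and the computation of volumes
requires zero sets of polynomials to be null (`volume_zeroSet_eq_zero`).
-/

open MeasureTheory MvPolynomial

/-- The log-canonical threshold of a polynomial `f ∈ ℂ[x₁,…,xₙ]` at a point `y`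
(with `f(y) = 0`), defined analytically as the supremum of the positive reals `s`
such that `‖f‖^{-2s}` is integrable on some neighbourhood of `y`. -/
noncomputable def lctAt {n : ℕ} (f : MvPolynomial (Fin n) ℂ) (y : Fin n → ℂ) : ℝ :=
  sSup {s : ℝ | 0 < s ∧ ∃ U ∈ nhds y,
    MeasureTheory.IntegrableOn
      (fun x : Fin n → ℂ => ‖MvPolynomial.eval x f‖ ^ (-2 * s)) U}

/-- The (global) log-canonical threshold of `f`, the infimum of the local
log-canonical thresholds over the zeros of `f`. -/
noncomputable def lct {n : ℕ} (f : MvPolynomial (Fin n) ℂ) : ℝ :=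
  sInf {c : ℝ | ∃ y, MvPolynomial.eval y f = 0 ∧ c = lctAt f y}
/-- The log-canonical threshold of an ideal `I ⊆ ℂ[x₁,…,xₙ]` at a point `y`,
defined analytically: the supremum of the positive reals `s` such that, for a
finite generating set `g₁,…,g_m` of `I`, the function `(∑ ‖gᵢ‖²)^{-s}` is
integrable on some neighbourhood of `y`. -/
noncomputable def lctIdealAt {n : ℕ} (I : Ideal (MvPolynomial (Fin n) ℂ))
    (y : Fin n → ℂ) : ℝ :=
  sSup {s : ℝ | 0 < s ∧ ∃ G : Finset (MvPolynomial (Fin n) ℂ),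
    Ideal.span (G : Set (MvPolynomial (Fin n) ℂ)) = I ∧
    ∃ U ∈ nhds y, MeasureTheory.IntegrableOn
      (fun x : Fin n → ℂ => (∑ g ∈ G, ‖MvPolynomial.eval x g‖ ^ 2) ^ (-s)) U}

/-- The (global) log-canonical threshold of an ideal: the infimum of the local
thresholds over the zero set of the ideal (for the zero ideal this gives `0`,
matching the convention `c(0) = 0`). -/
noncomputable def lctIdeal {n : ℕ} (I : Ideal (MvPolynomial (Fin n) ℂ)) : ℝ :=
  sInf {c : ℝ | ∃ y : Fin n → ℂ, (∀ g ∈ I, MvPolynomial.eval y g = 0) ∧ c = lctIdealAt I y}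

/-! ### Zero sets of polynomials -/

/-- The zero set of a nonzero polynomial is Lebesgue-null. By Fubini and induction on the number of
variables: for almost every value of the last `n` variables the leading coefficient in the first
variable does not vanish, and then only finitely many values of that variable are zeros. -/
theorem volume_zeroSet_eq_zero {n : ℕ} (p : MvPolynomial (Fin n) ℂ) (hp : p ≠ 0) :
    volume {x : Fin n → ℂ | eval x p = 0} = 0 := by
  induction n with
  | zero =>
    have : {x : Fin 0 → ℂ | eval x p = 0} = ∅ := by
      ext x
      simp only [Set.mem_ofPred_eq, Set.mem_empty_iff_false, iff_false]
      rw [eq_C_of_isEmpty p] at hp ⊢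
      simpa using hp
    simp [this]
  | succ n ih =>
    set q := finSuccEquiv ℂ n p with hq
    have hq0 : q ≠ 0 := by simpa [hq] using hp
    have hlead := ih q.leadingCoeff (by simpa using hq0)
    have hpres := volume_preserving_piFinSuccAbove (fun _ : Fin (n + 1) => ℂ) 0
    set S : Set (ℂ × (Fin n → ℂ)) := {z | eval (Fin.cons z.1 z.2 : Fin (n + 1) → ℂ) p = 0}
      with hS
    have hSm : MeasurableSet S := by
      have hc : Continuous fun z : ℂ × (Fin n → ℂ) =>
          eval (Fin.cons z.1 z.2 : Fin (n + 1) → ℂ) p :=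
        (continuous_eval p).comp (Continuous.finCons continuous_fst continuous_snd)
      exact (isClosed_singleton.preimage hc).measurableSet
    have hpre : {x : Fin (n + 1) → ℂ | eval x p = 0} =
        (MeasurableEquiv.piFinSuccAbove (fun _ : Fin (n + 1) => ℂ) 0) ⁻¹' S := by
      ext x
      simp only [Set.mem_ofPred_eq, Set.mem_preimage, hS]
      have : (Fin.cons ((MeasurableEquiv.piFinSuccAbove (fun _ : Fin (n + 1) => ℂ) 0) x).1
          ((MeasurableEquiv.piFinSuccAbove (fun _ : Fin (n + 1) => ℂ) 0) x).2 :
          Fin (n + 1) → ℂ) = x := by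
        ext i
        refine Fin.cases ?_ (fun j => ?_) i <;> simp [MeasurableEquiv.piFinSuccAbove, Fin.tail]
      rw [this]
    rw [hpre, hpres.measure_preimage hSm.nullMeasurableSet]
    change (volume.prod volume) S = 0
    rw [Measure.prod_apply_symm hSm]
    rw [lintegral_eq_zero_iff' (measurable_measure_prodMk_right hSm).aemeasurable]
    have hae : ∀ᵐ y : Fin n → ℂ, eval y q.leadingCoeff ≠ 0 := by
      rw [ae_iff]; simpa using hlead
    filter_upwards [hae] with y hy
    have hne : Polynomial.map (eval y) q ≠ 0 := by
      intro h0
      apply hy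
      have := congrArg (fun r => Polynomial.coeff r q.natDegree) h0
      simpa using this
    refine Set.Finite.measure_zero ?_ _
    refine (Polynomial.finite_setOfPred_isRoot hne).subset ?_
    intro z hz
    have hz' : eval (Fin.cons z y : Fin (n + 1) → ℂ) p = 0 := hz
    rw [eval_eq_eval_mv_eval'] at hz'
    exact hz'

theorem eval_ne_zero_ae {n : ℕ} {p : MvPolynomial (Fin n) ℂ} (hp : p ≠ 0) :
    ∀ᵐ x : Fin n → ℂ, eval x p ≠ 0 := by
  rw [ae_iff]; simpa using volume_zeroSet_eq_zero p hp

/-! ### Integrability of negative powers and volumes of sublevel sets -/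

/-- Chebyshev's inequality for sublevel sets: integrability of `W ^ (-s)` makes the part of `U` where
`W ≤ τ` have volume `O(τ ^ s)`. The set `W = 0` has to be null by hypothesis, since
`0 ^ (-s) = 0` in Lean. The set `A` need not be measurable. -/
theorem exists_volume_le_of_integrableOn {n : ℕ} {W : (Fin n → ℂ) → ℝ} (hW : ∀ x, 0 ≤ W x)
    (hW0 : ∀ᵐ x, W x ≠ 0) {s : ℝ} (hs : 0 < s) {U : Set (Fin n → ℂ)}
    (hU : IntegrableOn (fun x => W x ^ (-s)) U) :
    ∃ C : ℝ, 0 ≤ C ∧ ∀ τ > 0, ∀ A ⊆ U, (∀ x ∈ A, W x ≤ τ) →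
      volume A ≤ ENNReal.ofReal (C * τ ^ s) := by
  set L : ENNReal := ∫⁻ x in U, ENNReal.ofReal (W x ^ (-s)) with hL
  have hLtop : L < ⊤ := hU.lintegral_lt_top
  refine ⟨L.toReal, ENNReal.toReal_nonneg, fun τ hτ A hAU hA => ?_⟩
  have hM := mul_meas_ge_le_lintegral₀ (μ := volume.restrict U)
    (f := fun x => ENNReal.ofReal (W x ^ (-s)))
    hU.aestronglyMeasurable.aemeasurable.ennreal_ofReal (ENNReal.ofReal (τ ^ (-s)))
  have hAle : volume A ≤ (volume.restrict U)
      {x | ENNReal.ofReal (τ ^ (-s)) ≤ ENNReal.ofReal (W x ^ (-s))} := by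
    rw [← Measure.restrict_eq_self volume hAU]
    apply measure_mono_ae
    filter_upwards [ae_restrict_of_ae hW0] with x hx hxA
    exact ENNReal.ofReal_le_ofReal (Real.rpow_le_rpow_of_nonpos
      (lt_of_le_of_ne (hW x) (Ne.symm hx)) (hA x hxA) (by linarith))
  have hpos : 0 < τ ^ s := Real.rpow_pos_of_pos hτ s
  calc volume A
      = ENNReal.ofReal (τ ^ s) * (ENNReal.ofReal (τ ^ (-s)) * volume A) := by
        rw [← mul_assoc, ← ENNReal.ofReal_mul hpos.le, ← Real.rpow_add hτ]; simp
    _ ≤ ENNReal.ofReal (τ ^ s) * L := by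
        gcongr
        exact (mul_le_mul_right hAle _).trans hM
    _ = ENNReal.ofReal (L.toReal * τ ^ s) := by
        rw [mul_comm L.toReal, ENNReal.ofReal_mul hpos.le, ENNReal.ofReal_toReal hLtop.ne]

/-- Converse of the Chebyshev bound up to an arbitrarily small loss in the exponent, by the layer cake
formula: if the sublevel sets `W ≤ τ` in `B` have volume `O(τ ^ p)`, then `W ^ (-σ)` is integrable
on `B` for every `0 < σ < p`. -/
theorem integrableOn_rpow_neg_of_volume_le {n : ℕ} {W : (Fin n → ℂ) → ℝ} (hW : ∀ x, 0 ≤ W x)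
    (hWm : Measurable W) {B : Set (Fin n → ℂ)} (hB : volume B < ⊤)
    {p σ C τ₀ : ℝ} (hσ : 0 < σ) (hp : σ < p) (hτ₀ : 0 < τ₀)
    (h : ∀ τ, 0 < τ → τ < τ₀ → volume ({x | W x ≤ τ} ∩ B) ≤ ENNReal.ofReal (C * τ ^ p)) :
    IntegrableOn (fun x => W x ^ (-σ)) B := by
  have hm : Measurable fun x => W x ^ (-σ) := hWm.pow_const _
  have hnn : ∀ x, 0 ≤ W x ^ (-σ) := fun x => Real.rpow_nonneg (hW x) _
  refine ⟨hm.aestronglyMeasurable, ?_⟩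
  rw [hasFiniteIntegral_iff_ofReal (ae_of_all _ hnn),
    lintegral_eq_lintegral_meas_lt _ (ae_of_all _ hnn) hm.aemeasurable]
  set T : ℝ := τ₀ ^ (-σ) with hT
  have hTpos : 0 < T := Real.rpow_pos_of_pos hτ₀ _
  rw [← Set.Ioc_union_Ioi_eq_Ioi hTpos.le]
  refine (lintegral_union_le _ _ _).trans_lt (ENNReal.add_lt_top.2 ⟨?_, ?_⟩)
  · calc ∫⁻ t in Set.Ioc 0 T, (volume.restrict B) {a | t < W a ^ (-σ)}
        ≤ ∫⁻ t in Set.Ioc 0 T, volume B := by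
          refine lintegral_mono fun t => ?_
          exact (measure_mono (Set.subset_univ _)).trans (by simp)
      _ < ⊤ := by
          rw [setLIntegral_const]
          exact ENNReal.mul_lt_top hB (by simp)
  · have hint : IntegrableOn (fun t : ℝ => C * t ^ (-(p / σ))) (Set.Ioi T) :=
      (integrableOn_Ioi_rpow_of_lt (by
        rw [neg_lt_neg_iff, one_lt_div hσ]; exact hp) hTpos).const_mul _
    refine lt_of_le_of_lt ?_ hint.lintegral_lt_top
    refine setLIntegral_mono' measurableSet_Ioi fun t ht => ?_
    have ht0 : 0 < t := hTpos.trans ht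
    have hlt : t ^ (-(1 / σ)) < τ₀ := by
      calc t ^ (-(1 / σ)) < T ^ (-(1 / σ)) :=
            Real.rpow_lt_rpow_of_neg hTpos ht (by simpa using hσ)
        _ = τ₀ := by
            rw [hT, ← Real.rpow_mul hτ₀.le]
            have : -σ * -(1 / σ) = 1 := by field_simp
            rw [this, Real.rpow_one]
    have := h (t ^ (-(1 / σ))) (Real.rpow_pos_of_pos ht0 _) hlt
    rw [← Real.rpow_mul ht0.le, show -(1 / σ) * p = -(p / σ) by ring] at this
    refine le_trans ?_ this
    rw [Measure.restrict_apply (measurableSet_lt measurable_const hm)]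
    refine measure_mono (Set.inter_subset_inter_left _ fun x hx => ?_)
    simp only [Set.mem_ofPred_eq] at hx ⊢
    have hx0 : 0 < W x := by
      refine lt_of_le_of_ne (hW x) fun h0 => ?_
      rw [← h0, Real.zero_rpow (by linarith)] at hx
      linarith
    calc W x = (W x ^ (-σ)) ^ (-(1 / σ)) := by
          rw [← Real.rpow_mul hx0.le]
          have : -σ * -(1 / σ) = 1 := by field_simp
          rw [this, Real.rpow_one]
      _ ≤ t ^ (-(1 / σ)) :=
          Real.rpow_le_rpow_of_nonpos ht0 hx.le (by simpa using hσ.le)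

theorem nonpos_of_forall_le_mul_rpow {a C p r₀ : ℝ} (hp : 0 < p) (hr₀ : 0 < r₀)
    (h : ∀ r, 0 < r → r < r₀ → a ≤ C * r ^ p) : a ≤ 0 := by
  have hcont : Filter.Tendsto (fun r : ℝ => C * r ^ p) (nhdsWithin 0 (Set.Ioi 0)) (nhds 0) := by
    have : Filter.Tendsto (fun r : ℝ => C * r ^ p) (nhds 0) (nhds (C * 0 ^ p)) :=
      ((Real.continuousAt_rpow_const 0 p (Or.inr hp.le)).tendsto).const_mul C
    rw [Real.zero_rpow hp.ne', mul_zero] at this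
    exact this.mono_left nhdsWithin_le_nhds
  refine ge_of_tendsto hcont ?_
  filter_upwards [Ioo_mem_nhdsGT hr₀] with r hr
  exact h r hr.1 hr.2

/-! ### Homogeneous components and scaling -/

theorem finrank_real_pi (n : ℕ) : Module.finrank ℝ (Fin n → ℂ) = 2 * n := by
  rw [Module.finrank_pi_fintype]; simp [mul_comm]

/-- `f(r u) = ∑ rⁱ fᵢ(u)`. -/
theorem eval_smul_eq_sum {n : ℕ} (f : MvPolynomial (Fin n) ℂ) (r : ℝ) (u : Fin n → ℂ) :
    eval (r • u) f = ∑ i ∈ Finset.range (f.totalDegree + 1),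
      (r : ℂ) ^ i * eval u (homogeneousComponent i f) := by
  conv_lhs => rw [← sum_homogeneousComponent f]
  rw [map_sum]
  refine Finset.sum_congr rfl fun i _ => ?_
  have h := homogeneousComponent_isHomogeneous i f
  rw [eval_eq, eval_eq, Finset.mul_sum]
  refine Finset.sum_congr rfl fun d hd => ?_
  have hdeg : ∑ j ∈ d.support, d j = i := by
    have := h (mem_support_iff.1 hd)
    rw [← this, Finsupp.weight_apply]; simp [Finsupp.sum]
  have : ∀ j, (r • u) j = (r : ℂ) * u j := fun j => by simp
  simp only [this, mul_pow, Finset.prod_mul_distrib, Finset.prod_pow_eq_pow_sum, hdeg]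
  ring

open scoped Pointwise in
/-- The main estimate. If `|fᵢ(u)| ≤ r ^ (e + 1 - i)` for `1 ≤ i ≤ e`, then `|f(r u)| = O(r ^ (e + 1))`
uniformly for `u` in a ball. The Chebyshev bound for `f` near the origin therefore controls the
volume of the set of `r u`, and dividing by the Jacobian `r ^ (2 n)` controls that of the set
of `u`. -/
theorem exists_volume_sublevel_le {n : ℕ} {f : MvPolynomial (Fin n) ℂ} (e : ℕ) (hf : f ≠ 0)
    (hf0 : eval (0 : Fin n → ℂ) f = 0) {s : ℝ} (hs : 0 < s) {U : Set (Fin n → ℂ)}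
    (hU : U ∈ nhds 0)
    (hint : IntegrableOn (fun x : Fin n → ℂ => ‖eval x f‖ ^ (-2 * s)) U) (R : ℝ) (hR : 0 < R) :
    ∃ C r₀ : ℝ, 0 < r₀ ∧ ∀ r, 0 < r → r < r₀ →
      volume {u : Fin n → ℂ | u ∈ Metric.ball 0 R ∧
        ∀ i, 1 ≤ i → i ≤ e → ‖eval u (homogeneousComponent i f)‖ ≤ r ^ (e + 1 - i)} ≤
      ENNReal.ofReal (C * r ^ (2 * (((e : ℝ) + 1) * s - n))) := by
  obtain ⟨C, hC, hvol⟩ := exists_volume_le_of_integrableOn (W := fun x => ‖eval x f‖)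
    (fun x => norm_nonneg _) (by simpa using eval_ne_zero_ae hf) (s := 2 * s) (by linarith)
    (by simpa using hint)
  obtain ⟨ε, hε, hεU⟩ := Metric.mem_nhds_iff.1 hU
  -- a common bound on the ball for all homogeneous components
  have hM : ∃ M : ℝ, 1 ≤ M ∧ ∀ i ∈ Finset.range (f.totalDegree + 1),
      ∀ u ∈ Metric.ball (0 : Fin n → ℂ) R, ‖eval u (homogeneousComponent i f)‖ ≤ M := by
    have h1 : ∀ i : ℕ, ∃ M : ℝ, ∀ u ∈ Metric.closedBall (0 : Fin n → ℂ) R,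
        ‖eval u (homogeneousComponent i f)‖ ≤ M := fun i =>
      (isCompact_closedBall _ _).exists_bound_of_continuousOn
        (continuous_eval (homogeneousComponent i f)).continuousOn
    choose M hM using h1
    refine ⟨1 + ∑ i ∈ Finset.range (f.totalDegree + 1), |M i|, ?_, fun i hi u hu => ?_⟩
    · linarith [Finset.sum_nonneg fun i (_ : i ∈ Finset.range (f.totalDegree + 1)) =>
        abs_nonneg (M i)]
    · have := Finset.single_le_sum (f := fun i => |M i|) (fun i _ => abs_nonneg (M i)) hi
      have h2 := hM i u (Metric.ball_subset_closedBall hu)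
      have h3 := le_abs_self (M i)
      linarith
  obtain ⟨M, hM1, hM⟩ := hM
  set K : ℝ := (f.totalDegree + 1 : ℕ) * M with hK
  have hKpos : 0 < K := by positivity
  refine ⟨C * K ^ (2 * s), min 1 (ε / R), by positivity, fun r hr hrr => ?_⟩
  have hr1 : r < 1 := hrr.trans_le (min_le_left _ _)
  have hrR : r * R < ε := by
    rw [← lt_div_iff₀ hR]; exact hrr.trans_le (min_le_right _ _)
  set A : Set (Fin n → ℂ) := {u : Fin n → ℂ | u ∈ Metric.ball 0 R ∧
        ∀ i, 1 ≤ i → i ≤ e → ‖eval u (homogeneousComponent i f)‖ ≤ r ^ (e + 1 - i)} with hA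
  have h0 : homogeneousComponent 0 f = 0 := by
    rw [homogeneousComponent_zero]
    rw [eval_zero, constantCoeff_eq] at hf0
    simp [hf0]
  have key : volume (r • A) ≤ ENNReal.ofReal (C * (K * r ^ (e + 1)) ^ (2 * s)) := by
    refine hvol (K * r ^ (e + 1)) (by positivity) _ ?_ ?_
    · rintro _ ⟨u, hu, rfl⟩
      apply hεU
      have : ‖u‖ < R := by simpa using hu.1
      simp only [mem_ball_zero_iff, norm_smul, Real.norm_eq_abs, abs_of_pos hr]
      exact (mul_lt_mul_of_pos_left this hr).trans hrR
    · rintro _ ⟨u, hu, rfl⟩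
      change ‖eval (r • u) f‖ ≤ _
      rw [eval_smul_eq_sum]
      calc _ ≤ ∑ i ∈ Finset.range (f.totalDegree + 1), M * r ^ (e + 1) := by
            refine norm_sum_le_of_le _ fun i hi => ?_
            rw [norm_mul, norm_pow, Complex.norm_real, Real.norm_eq_abs, abs_of_pos hr]
            rcases Nat.eq_zero_or_pos i with rfl | hi0
            · rw [h0]; simp; positivity
            · by_cases hie : i ≤ e
              · calc r ^ i * ‖eval u (homogeneousComponent i f)‖
                    ≤ r ^ i * r ^ (e + 1 - i) := by gcongr; exact hu.2 i hi0 hie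
                  _ = 1 * r ^ (e + 1) := by rw [← pow_add, one_mul]; congr 1; omega
                  _ ≤ M * r ^ (e + 1) := by gcongr
              · rw [mul_comm]
                refine mul_le_mul (hM i hi u hu.1) ?_ (by positivity) (by positivity)
                exact pow_le_pow_of_le_one hr.le hr1.le (by omega)
        _ = K * r ^ (e + 1) := by rw [Finset.sum_const, hK]; simp; ring
  rw [Measure.addHaar_smul, finrank_real_pi, abs_of_pos (by positivity)] at key
  have hrn : 0 < r ^ (2 * n) := by positivity
  calc volume A = ENNReal.ofReal ((r ^ (2 * n))⁻¹) * (ENNReal.ofReal (r ^ (2 * n)) * volume A) := by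
        rw [← mul_assoc, ← ENNReal.ofReal_mul (by positivity), inv_mul_cancel₀ hrn.ne']; simp
    _ ≤ ENNReal.ofReal ((r ^ (2 * n))⁻¹) * ENNReal.ofReal (C * (K * r ^ (e + 1)) ^ (2 * s)) := by
        gcongr
    _ = _ := by
        rw [← ENNReal.ofReal_mul (by positivity)]
        congr 1
        rw [Real.mul_rpow hKpos.le (by positivity), ← Real.rpow_natCast r (e + 1),
          ← Real.rpow_mul hr.le, ← Real.rpow_natCast r (2 * n), ← Real.rpow_neg hr.le,
          show 2 * (((e : ℝ) + 1) * s - n) = -((2 * n : ℕ) : ℝ) + ((e + 1 : ℕ) : ℝ) * (2 * s) by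
            push_cast; ring, Real.rpow_add hr]
        ring

/-! ### The thresholds -/

/-- For a nonzero ideal vanishing at `y` the exponents in the definition of the threshold are at most
`n`, because `∑ |g|² = O(|x - y|²)` near `y`. Hence the supremum defining `lctIdealAt` is not a
junk value. -/
theorem lctIdealAt_set_bddAbove {n : ℕ} {I : Ideal (MvPolynomial (Fin n) ℂ)} (hI : I ≠ ⊥)
    {y : Fin n → ℂ} (hy : ∀ g ∈ I, eval y g = 0) :
    BddAbove {s : ℝ | 0 < s ∧ ∃ G : Finset (MvPolynomial (Fin n) ℂ),
    Ideal.span (G : Set (MvPolynomial (Fin n) ℂ)) = I ∧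
    ∃ U ∈ nhds y, MeasureTheory.IntegrableOn
      (fun x : Fin n → ℂ => (∑ g ∈ G, ‖MvPolynomial.eval x g‖ ^ 2) ^ (-s)) U} := by
  refine ⟨n, ?_⟩
  rintro s ⟨hs, G, hG, U, hU, hint⟩
  by_contra! hns
  obtain ⟨g, hgG, hg0⟩ : ∃ g ∈ G, g ≠ 0 := by
    by_contra! h
    exact hI (by rw [← hG, Ideal.span_eq_bot]; exact h)
  have hgle : ∀ x, ‖eval x g‖ ^ 2 ≤ ∑ g ∈ G, ‖eval x g‖ ^ 2 := fun x =>
    Finset.single_le_sum (f := fun g => ‖eval x g‖ ^ 2) (fun i _ => by positivity) hgG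
  obtain ⟨C, hC, hvol⟩ := exists_volume_le_of_integrableOn
    (W := fun x => ∑ g ∈ G, ‖eval x g‖ ^ 2)
    (fun x => by positivity) (by
      filter_upwards [eval_ne_zero_ae hg0] with x hx
      have h1 : 0 < ‖eval x g‖ ^ 2 := by positivity
      exact (h1.trans_le (hgle x)).ne') hs hint
  have hO : (fun x : Fin n → ℂ => ∑ g ∈ G, ‖eval x g‖ ^ 2) =O[nhds y]
      fun x => ‖x - y‖ ^ 2 := by
    refine Asymptotics.IsBigO.fun_sum fun g hg => ?_
    have hd : DifferentiableAt ℂ (fun x : Fin n → ℂ => eval x g) y :=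
      (AnalyticOnNhd.eval_mvPolynomial g y (Set.mem_univ y)).differentiableAt
    have := hd.isBigO_sub
    rw [hy g (by rw [← hG]; exact Ideal.subset_span hg)] at this
    simp only [sub_zero] at this
    exact this.norm_norm.pow 2
  obtain ⟨K, hKpos, hK⟩ := hO.exists_pos
  obtain ⟨ε, hε, hεU⟩ := Metric.mem_nhds_iff.1 (Filter.inter_mem hU hK.bound)
  have hball : 0 < (volume (Metric.ball (0 : Fin n → ℂ) 1)).toReal :=
    ENNReal.toReal_pos (Metric.measure_ball_pos _ _ one_pos).ne' measure_ball_lt_top.ne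
  refine absurd (nonpos_of_forall_le_mul_rpow
    (a := (volume (Metric.ball (0 : Fin n → ℂ) 1)).toReal) (C := C * K ^ s)
    (p := 2 * (s - n)) (r₀ := ε) (by linarith) hε fun r hr hrε => ?_) (not_le.2 hball)
  have hsub : Metric.closedBall y r ⊆ Metric.ball y ε := Metric.closedBall_subset_ball hrε
  have h := hvol (K * r ^ 2) (by positivity) (Metric.closedBall y r)
    (fun x hx => (hεU (hsub hx)).1) (fun x hx => by
      have h2 := (hεU (hsub hx)).2
      simp only [Set.mem_ofPred_eq, norm_pow, norm_norm] at h2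
      refine (Real.le_norm_self _).trans (h2.trans ?_)
      have : ‖x - y‖ ≤ r := by simpa [dist_eq_norm] using hx
      gcongr)
  rw [Measure.addHaar_closedBall _ _ hr.le, finrank_real_pi,
    ← ENNReal.ofReal_toReal (measure_ball_lt_top (x := (0 : Fin n → ℂ)) (r := 1)).ne,
    ← ENNReal.ofReal_mul (by positivity), ENNReal.ofReal_le_ofReal_iff (by positivity)] at h
  have hrn : 0 < r ^ (2 * n) := by positivity
  rw [← le_div_iff₀' hrn] at h
  refine h.trans_eq ?_
  rw [Real.mul_rpow hKpos.le (by positivity), ← Real.rpow_natCast r 2, ← Real.rpow_mul hr.le,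
    ← Real.rpow_natCast r (2 * n), show 2 * (s - n) = ((2 : ℕ) : ℝ) * s - ((2 * n : ℕ) : ℝ) by
      push_cast; ring, Real.rpow_sub hr]
  ring

/-- Let `f` be nonconstant with `f(0)=0`, `f = ∑_{i≥1} f_i` its decomposition into
homogeneous components. For `e ≥ 1`, with `d_e = lcm(1,…,e)` and `I_e(f)` the ideal
generated by `f_i^{d_e/(e−i+1)}` for `1 ≤ i ≤ e`, one has
`(e+1)·c₀(f) ≤ n + d_e·c(I_e(f))`. -/
theorem stmt13 {n : ℕ} (f : MvPolynomial (Fin n) ℂ) (e : ℕ)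
    (hf : 0 < f.totalDegree) (hf0 : MvPolynomial.eval (0 : Fin n → ℂ) f = 0)
    (he : 1 ≤ e)
    (de : ℕ) (hde : de = (Finset.Icc 1 e).lcm id)
    (Ie : Ideal (MvPolynomial (Fin n) ℂ))
    (hIe : Ie = Ideal.span {g | ∃ i, 1 ≤ i ∧ i ≤ e ∧
      g = (MvPolynomial.homogeneousComponent i f) ^ (de / (e - i + 1))}) :
    ((e : ℝ) + 1) * lctAt f 0 ≤ (n : ℝ) + (de : ℝ) * lctIdeal Ie := by
  have hfne : f ≠ 0 := by rintro rfl; simp at hf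
  have hde0 : 0 < de := by
    rw [hde, Nat.pos_iff_ne_zero, Ne, Finset.lcm_eq_zero_iff]
    simp
  have hdvd : ∀ i, 1 ≤ i → i ≤ e → (e + 1 - i) * (de / (e - i + 1)) = de := by
    intro i h1 h2
    rw [show e + 1 - i = e - i + 1 by omega]
    refine Nat.mul_div_cancel' ?_
    rw [hde]
    exact Finset.dvd_lcm (f := id) (by simp; omega)
  have hexp : ∀ i, 1 ≤ i → i ≤ e → de / (e - i + 1) ≠ 0 := by
    intro i h1 h2 h0
    have := hdvd i h1 h2
    rw [h0] at this
    omega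
  have hdeR : (0 : ℝ) < de := by exact_mod_cast hde0
  have hlct0 : 0 ≤ lctIdeal Ie := by
    refine Real.sInf_nonneg ?_
    rintro _ ⟨y, -, rfl⟩
    exact Real.sSup_nonneg fun s hs => hs.1.le
  rw [← le_div_iff₀' (by positivity)]
  refine Real.sSup_le ?_ (by positivity)
  rintro s ⟨hs, U, hU, hint⟩
  rw [le_div_iff₀' (by positivity)]
  by_contra! hlt
  have hq : 0 < ((e : ℝ) + 1) * s - n := by nlinarith [mul_nonneg hdeR.le hlct0]
  have hp : lctIdeal Ie < (((e : ℝ) + 1) * s - n) / de := by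
    rw [lt_div_iff₀' hdeR]; linarith
  by_cases hbot : Ie = ⊥
  · -- all `f_i` with `i ≤ e` vanish, so the whole unit ball has volume `O(r ^ (2q))`
    obtain ⟨C, r₀, hr₀, hC⟩ := exists_volume_sublevel_le e hfne hf0 hs hU hint 1 one_pos
    have hz : ∀ i, 1 ≤ i → i ≤ e → homogeneousComponent i f = 0 := by
      intro i h1 h2
      have hmem : (homogeneousComponent i f) ^ (de / (e - i + 1)) ∈ Ie := by
        rw [hIe]; exact Ideal.subset_span ⟨i, h1, h2, rfl⟩
      rw [hbot, Ideal.mem_bot] at hmem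
      exact pow_eq_zero_iff (hexp i h1 h2) |>.1 hmem
    have hball : 0 < (volume (Metric.ball (0 : Fin n → ℂ) 1)).toReal :=
      ENNReal.toReal_pos (Metric.measure_ball_pos _ _ one_pos).ne' measure_ball_lt_top.ne
    refine absurd (nonpos_of_forall_le_mul_rpow
      (a := (volume (Metric.ball (0 : Fin n → ℂ) 1)).toReal) (C := max C 0)
      (p := 2 * (((e : ℝ) + 1) * s - n)) (by linarith) hr₀ fun r hr hrr => ?_) (not_le.2 hball)
    refine ENNReal.toReal_le_of_le_ofReal (by positivity) ?_
    refine (measure_mono fun u hu => ?_).trans ((hC r hr hrr).trans (ENNReal.ofReal_le_ofReal ?_))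
    · exact ⟨hu, fun i h1 h2 => by rw [hz i h1 h2]; simp; positivity⟩
    · gcongr; exact le_max_left _ _
  · refine absurd hp (not_lt.2 ?_)
    refine le_csInf ⟨_, 0, ?_, rfl⟩ ?_
    · -- the origin is a zero of the ideal
      intro g hg
      have hle : Ie ≤ RingHom.ker (eval (0 : Fin n → ℂ)) := by
        rw [hIe, Ideal.span_le]
        rintro _ ⟨i, h1, h2, rfl⟩
        have hi0 : eval (0 : Fin n → ℂ) (homogeneousComponent i f) = 0 := by
          rw [eval_zero, constantCoeff_eq, coeff_homogeneousComponent]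
          simp; omega
        rw [SetLike.mem_coe, RingHom.mem_ker, map_pow, hi0, zero_pow (hexp i h1 h2)]
      exact hle hg
    · rintro _ ⟨y, hy, rfl⟩
      refine le_of_forall_lt_imp_le_of_dense fun σ hσ => ?_
      rcases le_or_gt σ 0 with hσ0 | hσ0
      · exact hσ0.trans (Real.sSup_nonneg fun s hs => hs.1.le)
      refine le_csSup (lctIdealAt_set_bddAbove hbot hy) ?_
      classical
      set G : Finset (MvPolynomial (Fin n) ℂ) := (Finset.Icc 1 e).image
        fun i => (homogeneousComponent i f) ^ (de / (e - i + 1)) with hG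
      refine ⟨hσ0, G, ?_, Metric.ball 0 (‖y‖ + 1), Metric.isOpen_ball.mem_nhds (by simp), ?_⟩
      · rw [hIe]
        congr 1
        ext g
        simp only [hG, Finset.coe_image, Finset.coe_Icc, Set.mem_image, Set.mem_Icc,
          Set.mem_ofPred_eq]
        constructor
        · rintro ⟨i, ⟨h1, h2⟩, rfl⟩; exact ⟨i, h1, h2, rfl⟩
        · rintro ⟨i, h1, h2, rfl⟩; exact ⟨i, ⟨h1, h2⟩, rfl⟩
      obtain ⟨C, r₀, hr₀, hC⟩ := exists_volume_sublevel_le e hfne hf0 hs hU hint (‖y‖ + 1)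
        (by positivity)
      have hWc : Continuous fun x : Fin n → ℂ => ∑ g ∈ G, ‖eval x g‖ ^ 2 :=
        continuous_finsetSum _ fun g _ => (continuous_eval g).norm.pow 2
      refine integrableOn_rpow_neg_of_volume_le (C := C) (τ₀ := r₀ ^ (2 * de))
        (fun x => by positivity) hWc.measurable measure_ball_lt_top hσ0 hσ (by positivity) ?_
      intro τ hτ hττ
      -- the level `τ` corresponds to the scale `r` with `τ = r ^ (2 * de)`
      set r : ℝ := τ ^ (((2 * de : ℕ) : ℝ)⁻¹) with hr
      have hr0 : 0 < r := Real.rpow_pos_of_pos hτ _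
      have hrτ : r ^ (2 * de) = τ := Real.rpow_inv_natCast_pow hτ.le (by omega)
      have hrr : r < r₀ := by
        rw [← hrτ] at hττ
        exact lt_of_pow_lt_pow_left₀ _ hr₀.le hττ
      have hfin := hC r hr0 hrr
      have heq : r ^ (2 * (((e : ℝ) + 1) * s - n)) = τ ^ ((((e : ℝ) + 1) * s - n) / de) := by
        rw [hr, ← Real.rpow_mul hτ.le]
        congr 1
        push_cast
        field_simp
      rw [heq] at hfin
      refine le_trans (measure_mono ?_) hfin
      rintro u ⟨hu, huB⟩
      refine ⟨huB, fun i h1 h2 => ?_⟩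
      have hmem : (homogeneousComponent i f) ^ (de / (e - i + 1)) ∈ G :=
        Finset.mem_image.2 ⟨i, Finset.mem_Icc.2 ⟨h1, h2⟩, rfl⟩
      have hle := Finset.single_le_sum (f := fun g => ‖eval u g‖ ^ 2)
        (fun i _ => by positivity) hmem
      have hle2 := hle.trans hu
      rw [← hrτ] at hle2
      simp only [map_pow, norm_pow] at hle2
      have : (‖eval u (homogeneousComponent i f)‖) ^ (de / (e - i + 1) * 2) ≤
          (r ^ (e + 1 - i)) ^ (de / (e - i + 1) * 2) := by
        rw [pow_mul, ← pow_mul r, ← mul_assoc, hdvd i h1 h2, mul_comm de 2]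
        exact hle2
      exact le_of_pow_le_pow_left₀ (by have := hexp i h1 h2; omega) (by positivity) this
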